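/- Let K be a compact metric space (possibly infinite dimensional) with dim K > 0, and let σ: K^ℤ → K^ℤ be the full shift on the alphabet K. Then mdim(K^ℤ, σ) ≥ 1. -/

import Mathlib

open Filter Set
open scoped ENNReal

namespace MeanDimPaper

variable {X : Type*} [TopologicalSpace X]

/-- `α` is an open cover of `X`. -/
def IsOpenCover (α : Set (Set X)) : Prop :=
  (∀ U ∈ α, IsOpen U) ∧ ⋃₀ α = Set.univ

/-- The order of a cover `α`: the maximum `n ≥ 0` such that there exist `n + 1`
pairwise distinct members of `α` with nonempty common intersection. -/
noncomputable def ord (α : Set (Set X)) : ℕ∞ :=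
  ⨆ n ∈ {n : ℕ | ∃ f : Fin (n + 1) → Set X,
      Function.Injective f ∧ (∀ i, f i ∈ α) ∧ (⋂ i, f i).Nonempty}, (n : ℕ∞)

/-- `β` refines `α`: every member of `β` is contained in some member of `α`. -/
def Refines (β α : Set (Set X)) : Prop := ∀ V ∈ β, ∃ U ∈ α, V ⊆ U

/-- `D(α)`: the minimum of `ord β` over open covers `β` refining `α`. -/
noncomputable def covD (α : Set (Set X)) : ℕ∞ :=
  ⨅ β ∈ {β : Set (Set X) | IsOpenCover β ∧ Refines β α}, ord β

/-- Topological (covering) dimension: the supremum of `D(α)` over open covers `α`. -/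
noncomputable def topDim (X : Type*) [TopologicalSpace X] : ℕ∞ :=
  ⨆ α ∈ {α : Set (Set X) | IsOpenCover α}, covD α

/-- Diameter of a set with respect to a distance function `d`. -/
noncomputable def diamD (d : X → X → ℝ) (U : Set X) : ℝ :=
  sSup {r | ∃ x ∈ U, ∃ y ∈ U, r = d x y}

/-- Mesh of a cover: the supremum of the diameters of its members. -/
noncomputable def mesh (d : X → X → ℝ) (α : Set (Set X)) : ℝ :=
  sSup (diamD d '' α)

/-- `widim_ε(X, d)`: the minimum of `D(α)` over open covers `α` with `mesh(α, d) < ε`. -/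
noncomputable def widim (ε : ℝ) (d : X → X → ℝ) : ℕ∞ :=
  ⨅ α ∈ {α : Set (Set X) | IsOpenCover α ∧ mesh d α < ε}, covD α

/-- `d` is a metric on `X` compatible with the topology of `X`. -/
structure IsCompatMetric {X : Type*} [TopologicalSpace X] (d : X → X → ℝ) : Prop where
  refl : ∀ x, d x x = 0
  eq_of : ∀ x y, d x y = 0 → x = y
  symm : ∀ x y, d x y = d y x
  triangle : ∀ x y z, d x z ≤ d x y + d y z
  isOpen_iff : ∀ U : Set X, IsOpen U ↔ ∀ x ∈ U, ∃ ε > 0, ∀ y, d x y < ε → y ∈ U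

/-- The dynamical distance `d_n(x, y) = max_{0 ≤ i < n} d(Tⁱ x, Tⁱ y)`. -/
noncomputable def dynDist (d : X → X → ℝ) (T : X → X) (n : ℕ) (x y : X) : ℝ :=
  sSup {r | ∃ i < n, r = d (T^[i] x) (T^[i] y)}

/-- Mean dimension `mdim(X, T)` computed with the metric `d`:
`lim_{ε → 0} lim_{n → ∞} widim_ε(X, d_n) / n`.  The inner limit exists (by
subadditivity of `n ↦ widim_ε(X, d_n)`) so it coincides with the liminf, and the inner
quantity is monotone as `ε` decreases, so the limit as `ε → 0` is the supremum over
`ε > 0`. -/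
noncomputable def mdim (T : X → X) (d : X → X → ℝ) : ℝ≥0∞ :=
  ⨆ (ε : ℝ) (_ : 0 < ε),
    Filter.liminf (fun n : ℕ => (widim ε (dynDist d T n) : ℝ≥0∞) / (n : ℝ≥0∞)) Filter.atTop

/-- The full shift `σ` on the alphabet `K`: `σ((xₙ)ₙ) = (xₙ₊₁)ₙ`. -/
def shift (K : Type*) : (ℤ → K) → ℤ → K := fun x n => x (n + 1)

/-!
Two points `p ≠ q` of one connected component of `K` serve as the ends of an interval. By Lebesgue's
covering theorem, an open cover of `Kⁿ` without members meeting two opposite faces `{u | u i = p}`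
and `{u | u i = q}` has order at least `n`: chains of small steps from `p` to `q` reduce this to
Sperner's lemma on a grid. Placing `Kⁿ` into the coordinates `0, …, n - 1` of `K^ℤ`, any cover of
`d_n`-mesh less than the `d`-distance of `{x | x 0 = p}` and `{x | x 0 = q}` is of this kind, so
the width for `d_n` is at least `n` for every `n`.

Sperner's lemma is a Stokes theorem mod 2. To the labels of a simplex of Kuhn's triangulation one
attaches a determinant with a column of ones; Laplace expansion along this column is a sum over the
facets. Interior facets cancel in pairs, and the boundary condition makes the determinant vanish on
all faces of the grid but one, to which induction on the dimension applies.
-/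

/-! ### Kuhn's triangulation of a grid -/

section Kuhn

variable {n m : ℕ}

/-- The vertices of a simplex of Kuhn's triangulation of the grid `{0, …, m}ⁿ`: starting from the
lowest corner of the unit cube `b`, the `k`-th vertex has moved up in the coordinates `i` with
`τ i < k`. -/
def kuhnVertex (b : Fin n → Fin m) (τ : Equiv.Perm (Fin n)) (k : Fin (n + 1)) :
    Fin n → Fin (m + 1) :=
  fun i => if (τ i).castSucc < k then (b i).succ else (b i).castSucc

/-- The permutation of `Fin (n + 1)` that maps `j` to `k` and acts as `τ` between the increasing
enumerations of the two complements; it turns simplices of a face of the grid into simplices of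
the grid. -/
def insertPerm (k j : Fin (n + 1)) (τ : Equiv.Perm (Fin n)) : Equiv.Perm (Fin (n + 1)) :=
  (finSuccEquiv' j).trans ((Equiv.optionCongr τ).trans (finSuccEquiv' k).symm)

@[simp]
lemma insertPerm_self (k j : Fin (n + 1)) (τ : Equiv.Perm (Fin n)) : insertPerm k j τ j = k := by
  simp [insertPerm]

@[simp]
lemma insertPerm_succAbove (k j : Fin (n + 1)) (τ : Equiv.Perm (Fin n)) (i : Fin n) :
    insertPerm k j τ (j.succAbove i) = k.succAbove (τ i) := by
  simp [insertPerm]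

lemma insertPerm_bijective (k : Fin (n + 1)) :
    Function.Bijective fun p : Fin (n + 1) × Equiv.Perm (Fin n) => insertPerm k p.1 p.2 := by
  refine (Fintype.bijective_iff_injective_and_card _).2 ⟨?_, ?_⟩
  · rintro ⟨j, τ⟩ ⟨j', τ'⟩ h
    dsimp only at h
    obtain rfl : j = j' := (insertPerm k j' τ').injective <| by
      rw [← h, insertPerm_self, h, insertPerm_self]
    have hτ : τ = τ' := Equiv.ext fun i => k.succAbove_right_injective <| by
      rw [← insertPerm_succAbove k j, h, insertPerm_succAbove]
    rw [hτ]
  · simp [Fintype.card_perm, Nat.factorial_succ]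

lemma kuhnVertex_swap_of_ne (b : Fin (n + 1) → Fin m) (τ : Equiv.Perm (Fin (n + 1))) (i : Fin n)
    {k : Fin (n + 2)} (hk : k ≠ i.succ.castSucc) :
    kuhnVertex b (τ.trans (Equiv.swap i.castSucc i.succ)) k = kuhnVertex b τ k := by
  funext x
  simp only [kuhnVertex, Equiv.trans_apply, Equiv.swap_apply_def, Fin.ext_iff, Fin.lt_def,
    apply_ite Fin.val, Fin.val_castSucc, Fin.val_succ, ne_eq] at hk ⊢
  congr 1
  rw [eq_iff_iff]
  split_ifs <;> omega

lemma kuhnVertex_insertPerm_zero_succ (b : Fin n → Fin m) (τ : Equiv.Perm (Fin n))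
    (j : Fin (n + 1)) (t : Fin m) (k : Fin (n + 1)) :
    kuhnVertex (j.insertNth t b) (insertPerm 0 j τ) k.succ
      = j.insertNth t.succ (kuhnVertex b τ k) := by
  refine Fin.eq_insertNth_iff.2 ⟨?_, funext fun i => ?_⟩ <;>
    simp [kuhnVertex, Fin.removeNth, Fin.lt_def]

lemma kuhnVertex_insertPerm_last_castSucc (b : Fin n → Fin m) (τ : Equiv.Perm (Fin n))
    (j : Fin (n + 1)) (t : Fin m) (k : Fin (n + 1)) :
    kuhnVertex (j.insertNth t b) (insertPerm (Fin.last n) j τ) k.castSucc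
      = j.insertNth t.castSucc (kuhnVertex b τ k) := by
  refine Fin.eq_insertNth_iff.2 ⟨?_, funext fun i => ?_⟩ <;>
    simp [kuhnVertex, Fin.removeNth, Fin.lt_def, Fin.is_le, not_lt.2]

section Stokes

variable {R : Type*} [CommRing R] [CharP R 2]

lemma sum_interior_facet_eq_zero (G : (Fin (n + 1) → Fin (n + 1) → Fin (m + 1)) → R)
    (b : Fin (n + 1) → Fin m) (i : Fin n) :
    ∑ τ, G (kuhnVertex b τ ∘ i.succ.castSucc.succAbove) = 0 := by
  have hfacet (τ : Equiv.Perm (Fin (n + 1))) :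
      kuhnVertex b (τ.trans (Equiv.swap i.castSucc i.succ)) ∘ i.succ.castSucc.succAbove
        = kuhnVertex b τ ∘ i.succ.castSucc.succAbove :=
    funext fun _ => kuhnVertex_swap_of_ne b τ i (Fin.succAbove_ne _ _)
  refine Finset.sum_involution (fun τ _ => τ.trans (Equiv.swap i.castSucc i.succ)) ?_ ?_ ?_ ?_
  · intro τ _
    rw [hfacet, CharTwo.add_self_eq_zero]
  · intro τ _ _ hτ
    have h := DFunLike.congr_fun hτ (τ.symm i.castSucc)
    simp [Fin.ext_iff] at h
  · simp
  · intro τ _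
    ext x
    simp

lemma sum_perm_eq_sum_insertPerm {M : Type*} [AddCommMonoid M] (k : Fin (n + 1))
    (F : (Fin (n + 1) → Fin m) → Equiv.Perm (Fin (n + 1)) → M) :
    ∑ b, ∑ τ, F b τ = ∑ j, ∑ b : Fin n → Fin m, ∑ τ : Equiv.Perm (Fin n), ∑ t : Fin m,
      F (j.insertNth t b) (insertPerm k j τ) := by
  calc ∑ b, ∑ τ, F b τ
      = ∑ b, ∑ j, ∑ τ : Equiv.Perm (Fin n), F b (insertPerm k j τ) :=
        Finset.sum_congr rfl fun b _ => by
          rw [← (insertPerm_bijective k).sum_comp (F b), Fintype.sum_prod_type]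
    _ = ∑ j, ∑ b, ∑ τ : Equiv.Perm (Fin n), F b (insertPerm k j τ) := Finset.sum_comm
    _ = _ := Finset.sum_congr rfl fun j _ => by
        rw [← (Fin.insertNthEquiv (fun _ => Fin m) j).sum_comp, Fintype.sum_prod_type_right]
        exact Finset.sum_congr rfl fun b _ => Finset.sum_comm

lemma sum_succ_add_sum_castSucc (f : Fin (m + 1) → R) :
    ∑ t : Fin m, f t.succ + ∑ t : Fin m, f t.castSucc = f (Fin.last m) + f 0 := by
  have h : f 0 + ∑ t : Fin m, f t.succ = ∑ t : Fin m, f t.castSucc + f (Fin.last m) :=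
    (Fin.sum_univ_succ f).symm.trans (Fin.sum_univ_castSucc f)
  linear_combination h + (∑ t : Fin m, f t.castSucc - f 0) * CharTwo.two_eq_zero (R := R)

theorem sum_kuhnVertex_facets (G : (Fin (n + 1) → Fin (n + 1) → Fin (m + 1)) → R) :
    ∑ b : Fin (n + 1) → Fin m, ∑ τ, ∑ k : Fin (n + 2), G (kuhnVertex b τ ∘ k.succAbove)
      = ∑ j : Fin (n + 1), ∑ b : Fin n → Fin m, ∑ τ,
          (G (fun k => j.insertNth (Fin.last m) (kuhnVertex b τ k))
            + G (fun k => j.insertNth 0 (kuhnVertex b τ k))) := by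
  have hsplit (b : Fin (n + 1) → Fin m) :
      ∑ τ, ∑ k : Fin (n + 2), G (kuhnVertex b τ ∘ k.succAbove)
        = ∑ τ, G (fun k => kuhnVertex b τ k.succ)
          + ∑ τ, G (fun k => kuhnVertex b τ k.castSucc) := by
    rw [Finset.sum_comm, Fin.sum_univ_castSucc, Fin.sum_univ_succ,
      Finset.sum_eq_zero fun i _ => sum_interior_facet_eq_zero G b i, add_zero]
    simp only [Function.comp_def, Fin.castSucc_zero, Fin.succAbove_zero, Fin.succAbove_last]
  simp only [hsplit, Finset.sum_add_distrib]
  rw [sum_perm_eq_sum_insertPerm 0, sum_perm_eq_sum_insertPerm (Fin.last n)]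
  simp only [← Finset.sum_add_distrib, kuhnVertex_insertPerm_zero_succ,
    kuhnVertex_insertPerm_last_castSucc]
  -- Facets between neighbouring cubes cancel, so the sum over `t` telescopes.
  refine Finset.sum_congr rfl fun j _ => Finset.sum_congr rfl fun b _ =>
    Finset.sum_congr rfl fun τ _ => ?_
  rw [Finset.sum_add_distrib]
  exact sum_succ_add_sum_castSucc fun s => G fun k => j.insertNth s (kuhnVertex b τ k)

end Stokes
end Kuhn

/-! ### Sperner's lemma -/

section Sperner

variable {n m : ℕ} {ι : Type*}

/-- Kuhn's boundary condition on a labelling of the grid `{0, …, m}ⁿ` by `0, …, n`. The labels are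
natural numbers, so that they can be shifted when passing to a face. -/
structure IsSpernerLabelling (ℓ : (Fin n → Fin (m + 1)) → ℕ) : Prop where
  le_dim : ∀ v, ℓ v ≤ n
  lt_of_eq_last : ∀ v (i : Fin n), v i = Fin.last m → (i : ℕ) < ℓ v
  ne_of_eq_zero : ∀ v (i : Fin n), v i = 0 → ℓ v ≠ i + 1

lemma IsSpernerLabelling.restrict {ℓ : (Fin (n + 1) → Fin (m + 1)) → ℕ}
    (hℓ : IsSpernerLabelling ℓ) :
    IsSpernerLabelling fun v : Fin n → Fin (m + 1) =>
      ℓ ((0 : Fin (n + 1)).insertNth (Fin.last m) v) - 1 where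
  le_dim v := Nat.sub_le_of_le_add (hℓ.le_dim _)
  lt_of_eq_last v i hi := Nat.lt_sub_of_add_lt <| by
    simpa using
      hℓ.lt_of_eq_last ((0 : Fin (n + 1)).insertNth (Fin.last m) v) i.succ (by simpa using hi)
  ne_of_eq_zero v i hi h := by
    refine hℓ.ne_of_eq_zero ((0 : Fin (n + 1)).insertNth (Fin.last m) v) i.succ
      (by simpa using hi) ?_
    rw [Fin.val_succ]
    omega

/-- The mod 2 determinant of the matrix whose `k`-th row consists of `a k` ones followed by zeros;
for labels `a k ≤ n` it is nonzero exactly when `a` is a permutation of `1, …, n`. -/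
def labelDet (a : Fin n → ℕ) : ZMod 2 :=
  (Matrix.of fun k t : Fin n => if (t : ℕ) < a k then (1 : ZMod 2) else 0).det

lemma injective_of_labelDet_ne_zero {a : Fin n → ℕ} (h : labelDet a ≠ 0) :
    Function.Injective a := by
  intro i j hij
  by_contra hne
  exact h <| Matrix.det_zero_of_row_eq hne <| by ext t; simp [hij]

lemma labelDet_eq_zero_of_column_eq {a : Fin n → ℕ} {s t : Fin n} (hst : s ≠ t)
    (h : ∀ k, (s : ℕ) < a k ↔ (t : ℕ) < a k) : labelDet a = 0 :=
  Matrix.det_zero_of_column_eq hst fun k => by simp [h]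

lemma labelDet_eq_zero_of_column_eq_zero {a : Fin n → ℕ} (t : Fin n) (h : ∀ k, a k ≤ t) :
    labelDet a = 0 :=
  Matrix.det_eq_zero_of_column_eq_zero t fun k => by simp [h]

lemma labelDet_add_one (a : Fin (n + 1) → ℕ) :
    labelDet (fun k => a k + 1) = ∑ k : Fin (n + 1), labelDet (a ∘ k.succAbove) := by
  rw [labelDet, Matrix.det_succ_column_zero]
  refine Finset.sum_congr rfl fun k _ => ?_
  simp [labelDet, Matrix.submatrix]

namespace IsSpernerLabelling

lemma labelDet_face_zero {ℓ : (Fin (n + 1) → Fin (m + 1)) → ℕ} (hℓ : IsSpernerLabelling ℓ)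
    (j : Fin (n + 1)) (w : Fin (n + 1) → Fin n → Fin (m + 1)) :
    labelDet (fun k => ℓ (j.insertNth 0 (w k))) = 0 := by
  have hne (k : Fin (n + 1)) : ℓ (j.insertNth 0 (w k)) ≠ j + 1 :=
    hℓ.ne_of_eq_zero _ j (Fin.insertNth_apply_same _ _ _)
  induction j using Fin.lastCases with
  | last =>
    refine labelDet_eq_zero_of_column_eq_zero (Fin.last n) fun k => ?_
    exact Nat.le_of_lt_succ <| lt_of_le_of_ne (hℓ.le_dim _) (hne k)
  | cast i =>
    refine labelDet_eq_zero_of_column_eq (Fin.castSucc_lt_succ (i := i)).ne fun k => ?_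
    have hk := hne k
    simp only [Fin.val_castSucc, Fin.val_succ] at hk ⊢
    omega

lemma labelDet_face_last {ℓ : (Fin (n + 1) → Fin (m + 1)) → ℕ} (hℓ : IsSpernerLabelling ℓ)
    {j : Fin (n + 1)} (hj : j ≠ 0) (w : Fin (n + 1) → Fin n → Fin (m + 1)) :
    labelDet (fun k => ℓ (j.insertNth (Fin.last m) (w k))) = 0 := by
  refine labelDet_eq_zero_of_column_eq hj fun k => ?_
  have hlt : (j : ℕ) < ℓ (j.insertNth (Fin.last m) (w k)) :=
    hℓ.lt_of_eq_last _ j (Fin.insertNth_apply_same _ _ _)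
  exact iff_of_true hlt (j.val.zero_le.trans_lt hlt)

theorem sum_labelDet_eq_one {ℓ : (Fin n → Fin (m + 1)) → ℕ} (hℓ : IsSpernerLabelling ℓ) :
    ∑ b : Fin n → Fin m, ∑ τ, labelDet (fun k => ℓ (kuhnVertex b τ k) + 1) = 1 := by
  induction n with
  | zero => simp [labelDet]
  | succ n ih =>
    have hface (w : Fin n → Fin (m + 1)) : ℓ ((0 : Fin (n + 1)).insertNth (Fin.last m) w)
        = ℓ ((0 : Fin (n + 1)).insertNth (Fin.last m) w) - 1 + 1 :=
      (Nat.sub_add_cancel <| hℓ.lt_of_eq_last _ 0 <| Fin.insertNth_apply_same _ _ _).symm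
    calc ∑ b : Fin (n + 1) → Fin m, ∑ τ, labelDet (fun k => ℓ (kuhnVertex b τ k) + 1)
        = ∑ b : Fin (n + 1) → Fin m, ∑ τ, ∑ k : Fin (n + 2),
            labelDet (ℓ ∘ (kuhnVertex b τ ∘ k.succAbove)) := by
          simp only [labelDet_add_one, Function.comp_def]
      _ = ∑ j : Fin (n + 1), ∑ b : Fin n → Fin m, ∑ τ,
            labelDet (fun k => ℓ (j.insertNth (Fin.last m) (kuhnVertex b τ k))) := by
          rw [sum_kuhnVertex_facets fun w => labelDet (ℓ ∘ w)]
          simp only [Function.comp_def, hℓ.labelDet_face_zero, add_zero]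
      _ = ∑ b : Fin n → Fin m, ∑ τ,
            labelDet (fun k =>
              ℓ ((0 : Fin (n + 1)).insertNth (Fin.last m) (kuhnVertex b τ k)) - 1 + 1) := by
          refine (Fintype.sum_eq_single 0 fun j hj => ?_).trans ?_
          · simp only [hℓ.labelDet_face_last hj, Finset.sum_const_zero]
          · simp only [← hface]
      _ = 1 := (ih hℓ.restrict :)

theorem exists_injective {ℓ : (Fin n → Fin (m + 1)) → ℕ} (hℓ : IsSpernerLabelling ℓ) :
    ∃ (b : Fin n → Fin m) (τ : Equiv.Perm (Fin n)), Function.Injective (ℓ ∘ kuhnVertex b τ) := by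
  obtain ⟨b, -, hb⟩ := Finset.exists_ne_zero_of_sum_ne_zero
    (hℓ.sum_labelDet_eq_one.trans_ne one_ne_zero)
  obtain ⟨τ, -, hτ⟩ := Finset.exists_ne_zero_of_sum_ne_zero hb
  exact ⟨b, τ, (injective_of_labelDet_ne_zero hτ).of_comp (f := (· + 1))⟩

end IsSpernerLabelling

/-- The label of a colour `c` of a colouring `s` of the grid: the largest `i + 1` such that `c`
occurs on the face `v i = m`, or `0` if it occurs on none of these faces. -/
noncomputable def faceLabel (s : (Fin n → Fin (m + 1)) → ι) (c : ι) : ℕ :=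
  open Classical in
  (Finset.univ.filter fun i : Fin n => ∃ v, s v = c ∧ v i = Fin.last m).sup fun i => (i : ℕ) + 1

lemma lt_faceLabel (s : (Fin n → Fin (m + 1)) → ι) {v : Fin n → Fin (m + 1)} {i : Fin n}
    (hi : v i = Fin.last m) : i < faceLabel s (s v) := by
  classical
  exact Finset.le_sup (f := fun i : Fin n => (i : ℕ) + 1)
    (Finset.mem_filter.2 ⟨Finset.mem_univ i, v, rfl, hi⟩)

lemma faceLabel_le (s : (Fin n → Fin (m + 1)) → ι) (c : ι) : faceLabel s c ≤ n :=
  Finset.sup_le fun i _ => i.isLt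

lemma exists_eq_last_of_faceLabel_eq {s : (Fin n → Fin (m + 1)) → ι} {c : ι} {i : Fin n}
    (hc : faceLabel s c = i + 1) : ∃ v, s v = c ∧ v i = Fin.last m := by
  classical
  obtain ⟨j, hj, hij⟩ := Finset.lt_sup_iff.1 (hc.ge.trans_lt' i.val.lt_succ_self)
  obtain ⟨-, v, rfl, hv⟩ := Finset.mem_filter.1 hj
  have hji : (j : ℕ) < i + 1 := hc ▸ lt_faceLabel s hv
  obtain rfl : i = j := Fin.ext (by omega)
  exact ⟨v, rfl, hv⟩

lemma isSpernerLabelling_faceLabel {s : (Fin n → Fin (m + 1)) → ι}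
    (hs : ∀ v w, s v = s w → ∀ i, v i = 0 → w i ≠ Fin.last m) :
    IsSpernerLabelling (faceLabel s ∘ s) where
  le_dim _ := faceLabel_le s _
  lt_of_eq_last _ _ := lt_faceLabel s
  ne_of_eq_zero v i hi hlabel := by
    obtain ⟨w, hwv, hw⟩ := exists_eq_last_of_faceLabel_eq hlabel
    exact hs v w hwv.symm i hi hw

theorem exists_injective_comp_kuhnVertex {s : (Fin n → Fin (m + 1)) → ι}
    (hs : ∀ v w, s v = s w → ∀ i, v i = 0 → w i ≠ Fin.last m) :
    ∃ (b : Fin n → Fin m) (τ : Equiv.Perm (Fin n)), Function.Injective (s ∘ kuhnVertex b τ) := by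
  obtain ⟨b, τ, hinj⟩ := (isSpernerLabelling_faceLabel hs).exists_injective
  exact ⟨b, τ, hinj.of_comp (f := faceLabel s)⟩

end Sperner

/-! ### Lebesgue's covering theorem -/

section Covering

variable {K : Type*} {p q : K} {n : ℕ}

lemma exists_relSeries_of_mem_connectedComponent [UniformSpace K] (h : q ∈ connectedComponent p)
    {V : SetRel K K} (hV : V ∈ uniformity K) :
    ∃ s : RelSeries V, s.head = p ∧ s.last = q := by
  let reachable : Set K := {z | ∃ s : RelSeries V, s.head = p ∧ s.last = z}
  have hstep {y z : K} (hy : y ∈ reachable) (hyz : (y, z) ∈ V) : z ∈ reachable := by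
    obtain ⟨s, hs, rfl⟩ := hy
    exact ⟨s.snoc z hyz, by simpa using hs, by simp⟩
  have hclopen : IsClopen reachable := by
    refine ⟨isOpen_compl_iff.1 <| isOpen_iff_mem_nhds.2 fun z hz => ?_,
      isOpen_iff_mem_nhds.2 fun z hz => ?_⟩
    · exact mem_of_superset (mem_nhds_right z hV) fun y hyz hy => hz (hstep hy hyz)
    · exact mem_of_superset (mem_nhds_left z hV) fun y hzy => hstep hz hzy
  exact hclopen.connectedComponent_subset (x := p) ⟨.singleton V p, rfl, rfl⟩ h

lemma dist_comp_kuhnVertex_lt [PseudoMetricSpace K] {δ : ℝ} (hδ : 0 < δ) {m : ℕ}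
    {x : Fin (m + 1) → K} (hx : ∀ t : Fin m, dist (x t.castSucc) (x t.succ) < δ)
    (b : Fin n → Fin m) (τ : Equiv.Perm (Fin n)) (k : Fin (n + 1)) :
    dist (x ∘ Fin.castSucc ∘ b) (x ∘ kuhnVertex b τ k) < δ := by
  refine (dist_pi_lt_iff hδ).2 fun i => ?_
  simp only [Function.comp_apply, kuhnVertex]
  split_ifs
  · exact hx (b i)
  · rwa [dist_self]

/-- Lebesgue's covering theorem, with the interval `[0, 1]` replaced by a connected component. -/
theorem le_ord_of_isOpenCover_pi [PseudoMetricSpace K] [CompactSpace K]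
    (hq : q ∈ connectedComponent p) {β : Set (Set (Fin n → K))} (hβ : IsOpenCover β)
    (hsep : ∀ V ∈ β, ∀ u ∈ V, ∀ w ∈ V, ∀ i, u i = p → w i ≠ q) : n ≤ ord β := by
  obtain ⟨δ, hδ, hball⟩ := lebesgue_number_lemma_of_metric_sUnion isCompact_univ hβ.1 hβ.2.ge
  obtain ⟨x, hhead, hlast⟩ :=
    exists_relSeries_of_mem_connectedComponent hq (Metric.dist_mem_uniformity hδ)
  choose s hsβ hs using fun v : Fin n → Fin (x.length + 1) => hball (x ∘ v) (mem_univ _)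
  have hmem (v : Fin n → Fin (x.length + 1)) : x ∘ v ∈ s v := hs v (Metric.mem_ball_self hδ)
  obtain ⟨b, τ, hinj⟩ := exists_injective_comp_kuhnVertex (s := s) fun v w hvw i hv hw =>
    hsep (s v) (hsβ v) (x ∘ v) (hmem v) (x ∘ w) (hvw ▸ hmem w) i
      ((congrArg x hv).trans hhead) ((congrArg x hw).trans hlast)
  refine le_iSup₂_of_le n ⟨s ∘ kuhnVertex b τ, hinj, fun k => hsβ _,
    x ∘ Fin.castSucc ∘ b, mem_iInter.2 fun k => hs _ ?_⟩ le_rfl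
  exact dist_comp_kuhnVertex_lt hδ x.step b τ k

lemma IsOpenCover.preimage {Y : Type*} [TopologicalSpace Y] {g : Y → X} (hg : Continuous g)
    {β : Set (Set X)} (hβ : IsOpenCover β) : IsOpenCover (Set.preimage g '' β) := by
  refine ⟨forall_mem_image.2 fun V hV => (hβ.1 V hV).preimage hg, ?_⟩
  rw [sUnion_image, ← preimage_iUnion₂, ← sUnion_eq_biUnion, hβ.2, preimage_univ]

lemma ord_preimage_le {Y Z : Type*} (g : Y → Z) (β : Set (Set Z)) :
    ord (Set.preimage g '' β) ≤ ord β := by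
  refine iSup₂_le ?_
  rintro n ⟨f, hf, hfβ, x, hx⟩
  choose V hVβ hV using hfβ
  refine le_iSup₂_of_le n ⟨V, ?_, hVβ, g x, mem_iInter.2 fun i => ?_⟩ le_rfl
  · exact .of_comp (f := Set.preimage g) <| by
      rwa [show Set.preimage g ∘ V = f from funext hV]
  · rw [← mem_preimage, hV]
    exact mem_iInter.1 hx i

end Covering

/-! ### Lower bounds for mean dimension -/

lemma lt_of_mesh_lt {Y : Type*} {d : Y → Y → ℝ} {M ε : ℝ} (hM : ∀ x y, d x y ≤ M)
    {α : Set (Set Y)} (hα : mesh d α < ε) {U : Set Y} (hU : U ∈ α) {x y : Y} (hx : x ∈ U)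
    (hy : y ∈ U) : d x y < ε := by
  have hdiam (V : Set Y) : diamD d V ≤ max M 0 := by
    refine Real.sSup_le ?_ (le_max_right _ _)
    rintro _ ⟨a, -, b, -, rfl⟩
    exact (hM a b).trans (le_max_left _ _)
  calc d x y ≤ diamD d U :=
        le_csSup ⟨M, by rintro _ ⟨a, -, b, -, rfl⟩; exact hM a b⟩ ⟨x, hx, y, hy, rfl⟩
    _ ≤ mesh d α := le_csSup ⟨_, forall_mem_image.2 fun V _ => hdiam V⟩ (mem_image_of_mem _ hU)
    _ < ε := hα

theorem le_widim {K : Type*} [PseudoMetricSpace K] [CompactSpace K] {p q : K}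
    (hq : q ∈ connectedComponent p) {n : ℕ} {g : (Fin n → K) → X} (hg : Continuous g)
    {d : X → X → ℝ} {M ε : ℝ} (hM : ∀ x y, d x y ≤ M)
    (hsep : ∀ u w i, u i = p → w i = q → ε ≤ d (g u) (g w)) : n ≤ widim ε d := by
  refine le_iInf₂ fun α hα => le_iInf₂ fun β hβ => ?_
  refine (le_ord_of_isOpenCover_pi hq (hβ.1.preimage hg) ?_).trans (ord_preimage_le g β)
  rintro _ ⟨V, hV, rfl⟩ u hu w hw i hui hwi
  obtain ⟨U, hU, hVU⟩ := hβ.2 V hV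
  exact (lt_of_mesh_lt hM hα.2 hU (hVU hu) (hVU hw)).not_ge (hsep u w i hui hwi)

lemma dynDist_le {Y : Type*} {d : Y → Y → ℝ} {M : ℝ} (hM₀ : 0 ≤ M) (hM : ∀ x y, d x y ≤ M)
    (T : Y → Y) (n : ℕ) (x y : Y) : dynDist d T n x y ≤ M := by
  refine Real.sSup_le ?_ hM₀
  rintro _ ⟨i, -, rfl⟩
  exact hM _ _

lemma le_dynDist {Y : Type*} {d : Y → Y → ℝ} {T : Y → Y} {n i : ℕ} (hi : i < n) (x y : Y) :
    d (T^[i] x) (T^[i] y) ≤ dynDist d T n x y := by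
  refine le_csSup (Set.Finite.bddAbove ?_) ⟨i, hi, rfl⟩
  refine ((Set.finite_lt_nat n).image fun i => d (T^[i] x) (T^[i] y)).subset ?_
  rintro _ ⟨j, hj, rfl⟩
  exact mem_image_of_mem _ hj

lemma one_le_mdim_of_le_widim {T : X → X} {d : X → X → ℝ} {ε : ℝ} (hε : 0 < ε)
    (h : ∀ n : ℕ, n ≤ widim ε (dynDist d T n)) : 1 ≤ mdim T d := by
  refine le_iSup₂_of_le ε hε (le_liminf_of_le (by isBoundedDefault) ?_)
  filter_upwards [eventually_ne_atTop 0] with n hn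
  rw [ENNReal.le_div_iff_mul_le (.inl (Nat.cast_ne_zero.2 hn)) (.inl (ENNReal.natCast_ne_top n)),
    one_mul, ← ENat.toENNReal_coe]
  exact ENat.toENNReal_le.2 (h n)

namespace IsCompatMetric

variable {d : X → X → ℝ}

/-- The metric space structure given by a compatible metric; its topology is definitionally the
given one. -/
abbrev toMetricSpace (hd : IsCompatMetric d) : MetricSpace X :=
  .ofDistTopology d hd.refl hd.symm hd.triangle hd.isOpen_iff hd.eq_of

variable [CompactSpace X]

lemma exists_forall_le (hd : IsCompatMetric d) : ∃ M, 0 ≤ M ∧ ∀ x y, d x y ≤ M := by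
  let _ := hd.toMetricSpace
  exact ⟨Metric.diam (univ : Set X), Metric.diam_nonneg, fun x y =>
    Metric.dist_le_diam_of_mem isCompact_univ.isBounded (mem_univ x) (mem_univ y)⟩

lemma exists_pos_forall_le (hd : IsCompatMetric d) {A B : Set X} (hA : IsClosed A)
    (hB : IsClosed B) (hAB : Disjoint A B) : ∃ ε > 0, ∀ x ∈ A, ∀ y ∈ B, ε ≤ d x y := by
  let _ := hd.toMetricSpace
  obtain ⟨ε, hε, hlt⟩ := Metric.exists_pos_forall_lt_edist hA.isCompact hB hAB
  refine ⟨ε, NNReal.coe_pos.2 hε, fun x hx y hy => ?_⟩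
  have hnndist : ε < nndist x y := by
    simpa only [edist_nndist, ENNReal.coe_lt_coe] using hlt x hx y hy
  exact NNReal.coe_le_coe.2 hnndist.le

end IsCompatMetric

section Shift

variable {K : Type*} {p q : K}

lemma shift_iterate_apply (x : ℤ → K) (i : ℕ) (k : ℤ) : (shift K)^[i] x k = x (k + i) := by
  induction i generalizing x with
  | zero => simp
  | succ i ih => rw [Function.iterate_succ_apply, ih, shift, Nat.cast_succ, add_assoc]

lemma continuous_extend [TopologicalSpace K] {ι κ : Type*} (e : ι → κ) (c : κ → K) :
    Continuous fun u : ι → K => Function.extend e u c := by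
  classical
  refine continuous_pi fun k => ?_
  by_cases hk : ∃ i, e i = k
  · simp only [Function.extend_def, dif_pos hk]
    exact continuous_apply _
  · simp only [Function.extend_def, dif_neg hk]
    exact continuous_const

theorem le_widim_dynDist_shift [PseudoMetricSpace K] [CompactSpace K]
    (hq : q ∈ connectedComponent p) {d : (ℤ → K) → (ℤ → K) → ℝ} {M ε : ℝ} (hM₀ : 0 ≤ M)
    (hM : ∀ x y, d x y ≤ M) (hsep : ∀ x y, x 0 = p → y 0 = q → ε ≤ d x y) (n : ℕ) :
    n ≤ widim ε (dynDist d (shift K) n) := by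
  let g (u : Fin n → K) : ℤ → K := Function.extend (fun i : Fin n => (i : ℤ)) u fun _ => p
  have hinj : Function.Injective fun i : Fin n => (i : ℤ) :=
    Nat.cast_injective.comp Fin.val_injective
  have heval (u : Fin n → K) (i : Fin n) : (shift K)^[i] (g u) 0 = u i := by
    rw [shift_iterate_apply, zero_add]
    exact hinj.extend_apply u _ i
  refine le_widim (g := g) hq (continuous_extend _ _) (dynDist_le hM₀ hM _ n) fun u w i hu hw => ?_
  exact (hsep _ _ ((heval u i).trans hu) ((heval w i).trans hw)).trans (le_dynDist i.isLt _ _)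

end Shift

/-! ### Spaces of positive dimension -/

lemma ord_eq_zero_of_pairwiseDisjoint {Y : Type*} {β : Set (Set Y)}
    (hβ : β.PairwiseDisjoint id) : ord β = 0 := by
  refine le_antisymm (iSup₂_le ?_) zero_le
  rintro n ⟨f, hf, hfβ, x, hx⟩
  rw [mem_iInter] at hx
  have hlast : Fin.last n = 0 :=
    hf <| hβ.elim_set (hfβ _) (hfβ 0) x (hx _) (hx 0)
  exact_mod_cast (Fin.last_eq_zero_iff.1 hlast).le

theorem topDim_eq_zero [CompactSpace X] [T2Space X] [TotallyDisconnectedSpace X] :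
    topDim X = 0 := by
  refine le_antisymm (iSup₂_le ?_) zero_le
  rintro α ⟨hopen, hcover⟩
  let U (V : α) : TopologicalSpace.Opens X := ⟨V, hopen V V.2⟩
  have hU : TopologicalSpace.IsOpenCover U := .of_sets _ (sUnion_eq_iUnion.symm.trans hcover)
  obtain ⟨n, W, hWα, hWcover, hdisj⟩ := hU.exists_finite_nonempty_disjoint_clopen_cover
  refine (iInf₂_le (range fun j => (W j : Set X)) ⟨⟨?isOpen, ?cover⟩, ?refines⟩).trans
    (ord_eq_zero_of_pairwiseDisjoint ?disjoint).le
  case isOpen => exact forall_mem_range.2 fun j => (W j).isClopen.isOpen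
  case cover =>
    rw [sUnion_range]
    exact univ_subset_iff.1 hWcover
  case refines =>
    refine forall_mem_range.2 fun j => ?_
    obtain ⟨V, hV⟩ := (hWα j).2
    exact ⟨V, V.2, hV⟩
  case disjoint =>
    exact Pairwise.range_pairwise fun i j hij => TopologicalSpace.Clopens.coe_disjoint.2 (hdisj hij)

lemma exists_ne_mem_connectedComponent_of_topDim_pos [CompactSpace X] [T2Space X]
    (h : 0 < topDim X) : ∃ p q : X, p ≠ q ∧ q ∈ connectedComponent p := by
  by_contra! hne
  have : TotallyDisconnectedSpace X :=
    totallyDisconnectedSpace_iff_connectedComponent_singleton.2 fun p =>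
      (subsingleton_of_forall_eq p fun q hq => of_not_not fun hqp => hne p q (Ne.symm hqp) hq)
        |>.eq_singleton_of_mem mem_connectedComponent
  exact h.ne' topDim_eq_zero

/-- for a compact metric space `K` (possibly infinite dimensional) with
`dim K > 0`, the mean dimension of the full shift on the alphabet `K` is at least `1`. -/
theorem one_le_mdim_fullshift {K : Type*} [MetricSpace K] [CompactSpace K]
    (hpos : 0 < topDim K)
    (d : (ℤ → K) → (ℤ → K) → ℝ) (hd : IsCompatMetric d) :
    1 ≤ mdim (shift K) d := by
  obtain ⟨p, q, hpq, hq⟩ := exists_ne_mem_connectedComponent_of_topDim_pos hpos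
  have hclosed (r : K) : IsClosed {x : ℤ → K | x 0 = r} :=
    isClosed_singleton.preimage (continuous_apply 0)
  have hdisj : Disjoint {x : ℤ → K | x 0 = p} {x | x 0 = q} :=
    Set.disjoint_left.2 fun x hxp hxq => hpq (hxp.symm.trans hxq)
  obtain ⟨ε, hε, hsep⟩ := hd.exists_pos_forall_le (hclosed p) (hclosed q) hdisj
  obtain ⟨M, hM₀, hM⟩ := hd.exists_forall_le
  exact one_le_mdim_of_le_widim hε <|
    le_widim_dynDist_shift hq hM₀ hM fun x y hx hy => hsep x hx y hy

end MeanDimPaper
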